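/- arXiv:2306.08932 — 4 statements merged into one kernel-verified Lean document; each statement's English description precedes it below -/
import Mathlib

section
/- For α, β ∈ reg(T), the following are equivalent: (1) there exist γ, δ ∈ reg(T) with αγ = β and βδ = α (i.e., β(x) = γ(α(x)) and α(x) = δ(β(x)) for all x ∈ X); (2) ker(α) = ker(β), i.e., for all x, y ∈ X, α(x) = α(y) if and only if β(x) = β(y). In other words, α and β are Green's R-related in the semigroup reg(T) if and only if they induce the same partition of X. -/
universe u

/-- The semigroup `T_{E*}(X)` of maps preserving `E` in both directions. -/
def TEstar {X : Type u} (E : Setoid X) : Set (X → X) :=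
  {α | ∀ x y : X, E.r x y ↔ E.r (α x) (α y)}

/-- The `E`-class of `x`. -/
def cls {X : Type u} (E : Setoid X) (x : X) : Set X := {y | E.r x y}

/-- The regular part `reg(T)` of `T_{E*}(X)`: every `E`-class meets the range. -/
def regT {X : Type u} (E : Setoid X) : Set (X → X) :=
  {α | α ∈ TEstar E ∧ ∀ x : X, (cls E x ∩ Set.range α).Nonempty}

/-!
Given `α ∈ reg(T)`, choose for every `z` a point `σ z` with `α (σ z) = z` whenever `z` lies in
the range of `α`, and with `α (σ z)` merely `E`-related to `z` otherwise; such a point exists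
because the range of `α` meets every `E`-class. If `ker α ⊆ ker β`, then `γ = β ∘ σ` satisfies
`γ ∘ α = β`, and it preserves `E` in both directions because `β` and `α` do, `σ` being an inverse
of `α` modulo `E`.
-/

section

variable {X : Type u} {E : Setoid X} {α β γ σ : X → X}

theorem comp_mem_TEstar (hβ : β ∈ TEstar E) (hα : α ∈ TEstar E) : β ∘ α ∈ TEstar E :=
  fun x y => (hα x y).trans (hβ (α x) (α y))

theorem mem_TEstar_of_rel_apply (hα : α ∈ TEstar E) (hσ : ∀ z, E.r z (α (σ z))) :
    σ ∈ TEstar E := by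
  intro z w
  calc E.r z w
    _ ↔ E.r (α (σ z)) (α (σ w)) :=
      ⟨fun h => E.trans' (E.symm' (hσ z)) (E.trans' h (hσ w)),
        fun h => E.trans' (hσ z) (E.trans' h (E.symm' (hσ w)))⟩
    _ ↔ E.r (σ z) (σ w) := (hα (σ z) (σ w)).symm

theorem exists_leftInvOn_range_and_rel {Y : Type*} {f : Y → X}
    (hf : ∀ x, (cls E x ∩ Set.range f).Nonempty) :
    ∃ s : X → Y, Set.LeftInvOn f s (Set.range f) ∧ ∀ z, E.r z (f (s z)) := by
  have exists_preimage : ∀ z, ∃ y, (z ∈ Set.range f → f y = z) ∧ E.r z (f y) := by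
    intro z
    by_cases hz : z ∈ Set.range f
    · obtain ⟨y, rfl⟩ := hz
      exact ⟨y, fun _ => rfl, E.refl' _⟩
    · obtain ⟨_, hzy, y, rfl⟩ := hf z
      exact ⟨y, fun h => absurd h hz, hzy⟩
  choose s hs hrel using exists_preimage
  exact ⟨s, hs, hrel⟩

theorem exists_mem_TEstar_comp_eq (hα : α ∈ regT E) (hβ : β ∈ TEstar E)
    (h : β.FactorsThrough α) : ∃ γ ∈ TEstar E, γ ∘ α = β := by
  obtain ⟨σ, hσ, hrel⟩ := exists_leftInvOn_range_and_rel hα.2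
  exact ⟨β ∘ σ, comp_mem_TEstar hβ (mem_TEstar_of_rel_apply hα.1 hrel),
    funext fun x => h (hσ (Set.mem_range_self x))⟩

theorem mem_regT_of_comp_mem_regT (hγ : γ ∈ TEstar E) (h : γ ∘ α ∈ regT E) : γ ∈ regT E :=
  ⟨hγ, fun x => (h.2 x).mono (Set.inter_subset_inter_right _ (Set.range_comp_subset_range α γ))⟩

theorem exists_mem_regT_comp_eq_iff (hα : α ∈ regT E) (hβ : β ∈ regT E) :
    (∃ γ ∈ regT E, γ ∘ α = β) ↔ β.FactorsThrough α := by
  constructor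
  · rintro ⟨γ, -, rfl⟩
    exact Function.FactorsThrough.rfl.comp_left γ
  · intro h
    obtain ⟨γ, hγ, rfl⟩ := exists_mem_TEstar_comp_eq hα hβ.1 h
    exact ⟨γ, mem_regT_of_comp_mem_regT hγ hβ, rfl⟩

end

/-- Green's `R`-relation on `reg(T)`: `α R β` iff `ker α = ker β`. -/
theorem stmt3 {X : Type u} [Nonempty X] (E : Setoid X) (α β : X → X)
    (hα : α ∈ regT E) (hβ : β ∈ regT E) :
    (∃ γ ∈ regT E, ∃ δ ∈ regT E, γ ∘ α = β ∧ δ ∘ β = α) ↔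
      (∀ x y : X, α x = α y ↔ β x = β y) := by
  calc (∃ γ ∈ regT E, ∃ δ ∈ regT E, γ ∘ α = β ∧ δ ∘ β = α)
    _ ↔ (∃ γ ∈ regT E, γ ∘ α = β) ∧ ∃ δ ∈ regT E, δ ∘ β = α := by grind
    _ ↔ β.FactorsThrough α ∧ α.FactorsThrough β :=
      and_congr (exists_mem_regT_comp_eq_iff hα hβ) (exists_mem_regT_comp_eq_iff hβ hα)
    _ ↔ ∀ x y, α x = α y ↔ β x = β y :=
      ⟨fun h x y => ⟨@h.1 x y, @h.2 x y⟩, fun h => ⟨fun x y => (h x y).1, fun x y => (h x y).2⟩⟩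
end

section
/- A nonempty subset J of reg(T) is a two-sided ideal of reg(T) (i.e., αβ ∈ J and βα ∈ J for all α ∈ J, β ∈ reg(T)) if and only if there is a nonempty index set K and, for each k ∈ K, a function r^k assigning to each E-class A a cardinal r^k(A) with 2 ≤ r^k(A) ≤ |A|⁺, such that J = ⋃_{k ∈ K} Q(r^k). -/
universe u

/-- The `E`-class indexed by an element of the quotient `X/E`. -/
def clsQ {X : Type u} (E : Setoid X) (A : Quotient E) : Set X :=
  {x | Quotient.mk E x = A}

/-- The ideal `Q(r)` of `reg(T)`. -/
def Qr {X : Type u} (E : Setoid X) (r : Quotient E → Cardinal.{u}) : Set (X → X) :=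
  {α | α ∈ regT E ∧ ∃ σ : Quotient E ≃ Quotient E,
    ∀ A : Quotient E, Cardinal.mk ↥(α '' clsQ E A) < r (σ A)}

/-!
A map lies in `reg(T)` exactly when it induces a permutation `p` of `X/E`, and then
`Aα = p(A) ∩ Xα`. An element `β` factors as `γαδ` with `γ, δ ∈ reg(T)` as soon as some permutation
`σ` of `X/E` satisfies `|Aβ| ≤ |σ(A)α|` for every class `A`: on each class, `γ` chooses
`α`-preimages along an injection of `Aβ` into `σ(A)α`, and `δ` inverts that injection. Hence the
principal ideal generated by `α` is `Q(r)` for `r(A) = |A ∩ Xα|⁺`, and an ideal is the union of the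
principal ideals of its elements. Conversely each `Q(r)` is an ideal, since composing with an
element of `reg(T)` permutes the classes and does not enlarge the images.
-/

section ClassPermutation

variable {X : Type u} {E : Setoid X} {α β : X → X} {p : Equiv.Perm (Quotient E)}

theorem clsQ_nonempty (A : Quotient E) : (clsQ E A).Nonempty :=
  Quotient.exists_rep A

theorem clsQ_mk (x : X) : clsQ E (Quotient.mk E x) = cls E x :=
  Set.ext fun _ => eq_comm.trans Quotient.eq

theorem clsQ_inter_range_nonempty (hα : α ∈ regT E) (A : Quotient E) :
    (clsQ E A ∩ Set.range α).Nonempty := by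
  induction A using Quotient.inductionOn with
  | h x => exact clsQ_mk x ▸ hα.2 x

theorem exists_perm_semiconj_of_mem_regT (hα : α ∈ regT E) :
    ∃ p : Equiv.Perm (Quotient E), Function.Semiconj (Quotient.mk E) α p := by
  let f : Quotient E → Quotient E := Quotient.map α fun x y => (hα.1 x y).1
  have f_injective : f.Injective := by
    rintro ⟨x⟩ ⟨y⟩ hxy
    exact Quotient.sound ((hα.1 x y).2 (Quotient.exact hxy))
  have f_surjective : f.Surjective := fun A => by
    obtain ⟨_, hA, x, rfl⟩ := clsQ_inter_range_nonempty hα A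
    exact ⟨Quotient.mk E x, hA⟩
  exact ⟨Equiv.ofBijective f ⟨f_injective, f_surjective⟩, fun _ => rfl⟩

theorem preimage_clsQ (hp : Function.Semiconj (Quotient.mk E) α p) (A : Quotient E) :
    α ⁻¹' clsQ E (p A) = clsQ E A := by
  ext x
  exact (hp x).congr_left.trans p.apply_eq_iff_eq

theorem image_clsQ (hp : Function.Semiconj (Quotient.mk E) α p) (A : Quotient E) :
    α '' clsQ E A = clsQ E (p A) ∩ Set.range α := by
  rw [← preimage_clsQ hp, Set.image_preimage_eq_inter_range]

theorem mem_regT_of_semiconj (hp : Function.Semiconj (Quotient.mk E) α p) : α ∈ regT E := by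
  refine ⟨fun x y => ?_, fun x => ?_⟩
  · calc
      E.r x y ↔ Quotient.mk E x = Quotient.mk E y := Quotient.eq.symm
      _ ↔ Quotient.mk E (α x) = Quotient.mk E (α y) := by rw [hp, hp, p.apply_eq_iff_eq]
      _ ↔ E.r (α x) (α y) := Quotient.eq
  · rw [← clsQ_mk, ← p.apply_symm_apply (Quotient.mk E x), ← image_clsQ hp]
    exact (clsQ_nonempty _).image α

theorem comp_mem_regT (hβ : β ∈ regT E) (hα : α ∈ regT E) : β ∘ α ∈ regT E := by
  obtain ⟨p, hp⟩ := exists_perm_semiconj_of_mem_regT hα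
  obtain ⟨q, hq⟩ := exists_perm_semiconj_of_mem_regT hβ
  exact mem_regT_of_semiconj (p := p.trans q) (hq.comp_right hp)

end ClassPermutation

section Factorization

theorem exists_factorization_of_mk_image_le {S T : Type*} {Y : Type u} {f : S → Y} {g : T → Y}
    {s : Set S} {t : Set T} (hs : s.Nonempty)
    (h : Cardinal.mk ↥(f '' s) ≤ Cardinal.mk ↥(g '' t)) :
    ∃ (c : s → t) (d : Y → f '' s), ∀ x : s, (d (g (c x)) : Y) = f x := by
  obtain ⟨e⟩ := h
  have : Nonempty (f '' s) := (hs.image f).to_subtype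
  let i : f '' s → Y := Subtype.val ∘ e
  have i_injective : i.Injective := Subtype.val_injective.comp e.injective
  let fs : s → f '' s := fun x => ⟨f x, Set.mem_image_of_mem f x.2⟩
  have exists_lift : ∀ x : s, ∃ z : t, g z = i (fs x) := fun x => by
    obtain ⟨z, hz, hgz⟩ := (e (fs x)).2
    exact ⟨⟨z, hz⟩, hgz⟩
  choose c hc using exists_lift
  refine ⟨c, Function.invFun i, fun x => ?_⟩
  rw [hc, Function.leftInverse_invFun i_injective]

variable {X : Type u} {E : Setoid X} {α β : X → X}

theorem exists_factorization_of_mk_image_clsQ_le (hα : α ∈ regT E) (hβ : β ∈ regT E)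
    {σ : Equiv.Perm (Quotient E)}
    (h : ∀ A, Cardinal.mk ↥(β '' clsQ E A) ≤ Cardinal.mk ↥(α '' clsQ E (σ A))) :
    ∃ γ ∈ regT E, ∃ δ ∈ regT E, δ ∘ α ∘ γ = β := by
  obtain ⟨p, hp⟩ := exists_perm_semiconj_of_mem_regT hα
  obtain ⟨q, hq⟩ := exists_perm_semiconj_of_mem_regT hβ
  choose c d hcd using fun A => exists_factorization_of_mk_image_le (clsQ_nonempty A) (h A)
  let γ : X → X := fun x => c (Quotient.mk E x) ⟨x, rfl⟩
  let τ : Equiv.Perm (Quotient E) := (σ.trans p).symm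
  let δ : X → X := fun y => d (τ (Quotient.mk E y)) y
  have hγ : Function.Semiconj (Quotient.mk E) γ σ := fun x => (c (Quotient.mk E x) ⟨x, rfl⟩).2
  have hδ : Function.Semiconj (Quotient.mk E) δ (τ.trans q) := fun y =>
    ((image_clsQ hq _).subset (d (τ (Quotient.mk E y)) y).2).1
  refine ⟨γ, mem_regT_of_semiconj hγ, δ, mem_regT_of_semiconj hδ, funext fun x => ?_⟩
  have class_eq : τ (Quotient.mk E (α (γ x))) = Quotient.mk E x := by
    rw [hp, hγ]
    exact (σ.trans p).symm_apply_apply _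
  calc
    δ (α (γ x)) = d (Quotient.mk E x) (α (γ x)) :=
      congrArg (fun A => (d A (α (γ x)) : X)) class_eq
    _ = β x := hcd _ ⟨x, rfl⟩

end Factorization

section Ideals

/-- `J` is stable under composition with elements of `reg(T)` on both sides, that is, a two-sided
ideal of `reg(T)`; neither `J ⊆ reg(T)` nor `J ≠ ∅` is built in. -/
def IsRegTIdeal {X : Type u} (E : Setoid X) (J : Set (X → X)) : Prop :=
  ∀ α ∈ J, ∀ β ∈ regT E, β ∘ α ∈ J ∧ α ∘ β ∈ J

/-- The function `A ↦ |A ∩ Xα|⁺`, for which `Q(r)` is the principal ideal of `reg(T)` generated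
by `α`. Counting `Xα` inside the target class `A` instead of `Aα` is what gives
`r(A) ≤ |A|⁺`. -/
noncomputable def principalBound {X : Type u} (E : Setoid X) (α : X → X) (A : Quotient E) :
    Cardinal.{u} :=
  Order.succ (Cardinal.mk ↥(clsQ E A ∩ Set.range α))

variable {X : Type u} {E : Setoid X} {J : Set (X → X)} {α : X → X}

theorem two_le_principalBound (hα : α ∈ regT E) (A : Quotient E) : 2 ≤ principalBound E α A := by
  have one_le : 1 ≤ Cardinal.mk ↥(clsQ E A ∩ Set.range α) :=
    Cardinal.one_le_iff_ne_zero.2 <|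
      Cardinal.mk_ne_zero_iff.2 (clsQ_inter_range_nonempty hα A).to_subtype
  rw [← one_add_one_eq_two]
  exact Cardinal.add_one_le_of_lt (Order.lt_succ_of_le one_le)

theorem principalBound_le (α : X → X) (A : Quotient E) :
    principalBound E α A ≤ Order.succ (Cardinal.mk ↥(clsQ E A)) :=
  Order.succ_le_succ (Cardinal.mk_le_mk_of_subset Set.inter_subset_left)

theorem mem_Qr_principalBound (hα : α ∈ regT E) : α ∈ Qr E (principalBound E α) := by
  obtain ⟨p, hp⟩ := exists_perm_semiconj_of_mem_regT hα
  refine ⟨hα, p, fun A => ?_⟩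
  rw [image_clsQ hp]
  exact Order.lt_succ _

theorem isRegTIdeal_Qr (r : Quotient E → Cardinal.{u}) : IsRegTIdeal E (Qr E r) := by
  rintro α ⟨hα, σ, hσ⟩ β hβ
  obtain ⟨q, hq⟩ := exists_perm_semiconj_of_mem_regT hβ
  refine ⟨⟨comp_mem_regT hβ hα, σ, fun A => ?_⟩, comp_mem_regT hα hβ, q.trans σ, fun A => ?_⟩
  · rw [Set.image_comp]
    exact Cardinal.mk_image_le.trans_lt (hσ A)
  · have image_subset : α ∘ β '' clsQ E A ⊆ α '' clsQ E (q A) := by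
      rw [Set.image_comp, image_clsQ hq]
      exact Set.image_mono Set.inter_subset_left
    exact (Cardinal.mk_le_mk_of_subset image_subset).trans_lt (hσ (q A))

namespace IsRegTIdeal

theorem iUnion {K : Sort*} {J : K → Set (X → X)} (hJ : ∀ k, IsRegTIdeal E (J k)) :
    IsRegTIdeal E (⋃ k, J k) := by
  intro α hα β hβ
  obtain ⟨k, hk⟩ := Set.mem_iUnion.1 hα
  exact ⟨Set.mem_iUnion_of_mem k (hJ k α hk β hβ).1, Set.mem_iUnion_of_mem k (hJ k α hk β hβ).2⟩

theorem Qr_principalBound_subset (hJ : IsRegTIdeal E J) (hαJ : α ∈ J) (hα : α ∈ regT E) :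
    Qr E (principalBound E α) ⊆ J := by
  rintro β ⟨hβ, σ, hσ⟩
  obtain ⟨p, hp⟩ := exists_perm_semiconj_of_mem_regT hα
  have image_le (A : Quotient E) :
      Cardinal.mk ↥(β '' clsQ E A) ≤ Cardinal.mk ↥(α '' clsQ E ((σ.trans p.symm) A)) := by
    rw [image_clsQ hp, Equiv.trans_apply, p.apply_symm_apply]
    exact Order.lt_succ_iff.1 (hσ A)
  obtain ⟨γ, hγ, δ, hδ, rfl⟩ := exists_factorization_of_mk_image_clsQ_le hα hβ image_le
  exact (hJ _ (hJ α hαJ γ hγ).2 δ hδ).1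

theorem eq_iUnion_Qr (hJ : IsRegTIdeal E J) (hJsub : J ⊆ regT E) :
    J = ⋃ α : J, Qr E (principalBound E α.1) :=
  Set.Subset.antisymm
    (fun α hα => Set.mem_iUnion_of_mem ⟨α, hα⟩ (mem_Qr_principalBound (hJsub hα)))
    (Set.iUnion_subset fun α => hJ.Qr_principalBound_subset α.2 (hJsub α.2))

end IsRegTIdeal

end Ideals

/-- The two-sided ideals of `reg(T)` are exactly the unions `⋃ₖ Q(rᵏ)`. -/
theorem stmt9 {X : Type u} [Nonempty X] (E : Setoid X) (J : Set (X → X))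
    (hJne : J.Nonempty) (hJsub : J ⊆ regT E) :
    (∀ α ∈ J, ∀ β ∈ regT E, β ∘ α ∈ J ∧ α ∘ β ∈ J) ↔
      ∃ (K : Type u) (_ : Nonempty K) (r : K → Quotient E → Cardinal.{u}),
        (∀ k : K, ∀ A : Quotient E,
          2 ≤ r k A ∧ r k A ≤ Order.succ (Cardinal.mk ↥(clsQ E A))) ∧
        J = ⋃ k : K, Qr E (r k) := by
  constructor
  · intro hJ
    exact ⟨J, hJne.to_subtype, fun α => principalBound E α.1,
      fun α A => ⟨two_le_principalBound (hJsub α.2) A, principalBound_le α.1 A⟩,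
      IsRegTIdeal.eq_iUnion_Qr hJ hJsub⟩
  · rintro ⟨K, _, r, -, rfl⟩
    exact IsRegTIdeal.iUnion fun k => isRegTIdeal_Qr (r k)
end

section
/- For α, β ∈ Q(2), α and β are Green's H-related in the semigroup Q(2) (i.e., there exist γ, δ ∈ Q(2) ∪ {id_X} with γα = β and δβ = α, and there exist γ', δ' ∈ Q(2) ∪ {id_X} with αγ' = β and βδ' = α) if and only if Xα = Xβ. -/
universe u

/-- The kernel `Q(2)` of `reg(T)`: every `E`-class has a one-point image. -/
def Q2 {X : Type u} (E : Setoid X) : Set (X → X) :=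
  {α | α ∈ regT E ∧ ∀ x : X, ∃ y : X, α '' cls E x = {y}}

/- A map in `Q(2)` is the same thing as a map `f : X/E → X` for which `mk ∘ f` is a permutation of
`X/E`, while a map in `reg(T)` merely induces such a permutation. Inverting the permutation
induced by `α` always solves `γ ∘ α = β`, so only `α ∘ γ = β` constrains the pair. When
`Xβ ⊆ Xα`, choosing a preimage under `α` for the value of `β` on each class solves it, and this
solution lies in `Q(2)` because `α` induces an injection of `X/E`. -/

section

open Function

variable {X : Type u} {E : Setoid X} {α β : X → X}

theorem mem_TEstar_iff :
    α ∈ TEstar E ↔ ∃ φ : Quotient E → Quotient E, Injective φ ∧ Semiconj (Quotient.mk E) α φ := by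
  constructor
  · intro hα
    refine ⟨Quotient.map α fun x y => (hα x y).1, ?_, fun _ => rfl⟩
    rintro ⟨x⟩ ⟨y⟩ hxy
    exact Quotient.sound ((hα x y).2 (Quotient.exact hxy))
  · rintro ⟨φ, φ_inj, hφ⟩ x y
    calc E.r x y ↔ Quotient.mk E x = Quotient.mk E y := Quotient.eq.symm
      _ ↔ φ (Quotient.mk E x) = φ (Quotient.mk E y) := φ_inj.eq_iff.symm
      _ ↔ Quotient.mk E (α x) = Quotient.mk E (α y) := by rw [hφ x, hφ y]
      _ ↔ E.r (α x) (α y) := Quotient.eq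

theorem forall_cls_inter_range_nonempty_iff :
    (∀ x, (cls E x ∩ Set.range α).Nonempty) ↔ Surjective (Quotient.mk E ∘ α) := by
  constructor
  · rintro h ⟨x⟩
    obtain ⟨_, hx, z, rfl⟩ := h x
    exact ⟨z, (Quotient.sound hx).symm⟩
  · intro h x
    obtain ⟨z, hz⟩ := h (Quotient.mk E x)
    exact ⟨α z, Quotient.exact hz.symm, z, rfl⟩

theorem mem_regT_iff :
    α ∈ regT E ↔ ∃ φ : Quotient E → Quotient E, Bijective φ ∧ Semiconj (Quotient.mk E) α φ := by
  have surjective_iff {φ : Quotient E → Quotient E} (hφ : Semiconj (Quotient.mk E) α φ) :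
      Surjective (Quotient.mk E ∘ α) ↔ Surjective φ := by
    rw [hφ.comp_eq, Quotient.mk_surjective.of_comp_iff]
  rw [regT, Set.mem_ofPred_eq, mem_TEstar_iff, forall_cls_inter_range_nonempty_iff]
  constructor
  · rintro ⟨⟨φ, φ_inj, hφ⟩, hα⟩
    exact ⟨φ, ⟨φ_inj, (surjective_iff hφ).1 hα⟩, hφ⟩
  · rintro ⟨φ, φ_bij, hφ⟩
    exact ⟨⟨φ, φ_bij.injective, hφ⟩, (surjective_iff hφ).2 φ_bij.surjective⟩

theorem forall_image_cls_eq_singleton_iff :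
    (∀ x, ∃ y, α '' cls E x = {y}) ↔ ∃ f : Quotient E → X, f ∘ Quotient.mk E = α := by
  constructor
  · intro h
    have eq_of_rel (x y : X) (hxy : E x y) : α x = α y := by
      obtain ⟨z, hz⟩ := h x
      have hx : α x = z := hz.subset ⟨x, E.refl x, rfl⟩
      have hy : α y = z := hz.subset ⟨y, hxy, rfl⟩
      exact hx.trans hy.symm
    exact ⟨Quotient.lift α eq_of_rel, rfl⟩
  · rintro ⟨f, rfl⟩ x
    refine ⟨f (Quotient.mk E x), Set.Subset.antisymm ?_ ?_⟩
    · rintro _ ⟨y, hxy, rfl⟩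
      exact congrArg f (Quotient.sound hxy).symm
    · rintro _ rfl
      exact ⟨x, E.refl x, rfl⟩

theorem mem_Q2_iff :
    α ∈ Q2 E ↔
      ∃ f : Quotient E → X, Bijective (Quotient.mk E ∘ f) ∧ f ∘ Quotient.mk E = α := by
  rw [Q2, Set.mem_ofPred_eq, mem_regT_iff, forall_image_cls_eq_singleton_iff]
  constructor
  · rintro ⟨⟨φ, φ_bij, hφ⟩, f, rfl⟩
    have mk_comp_f : Quotient.mk E ∘ f = φ := Quotient.mk_surjective.injective_comp_right hφ.comp_eq
    exact ⟨f, mk_comp_f ▸ φ_bij, rfl⟩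
  · rintro ⟨f, f_bij, rfl⟩
    exact ⟨⟨Quotient.mk E ∘ f, f_bij, fun _ => rfl⟩, f, rfl⟩

theorem exists_mem_Q2_comp_eq_of_range_subset (hα : α ∈ TEstar E) (hβ : β ∈ Q2 E)
    (h : Set.range β ⊆ Set.range α) : ∃ γ ∈ Q2 E, α ∘ γ = β := by
  obtain ⟨φ, φ_inj, hφ⟩ := mem_TEstar_iff.1 hα
  obtain ⟨g, g_bij, rfl⟩ := mem_Q2_iff.1 hβ
  rw [Quotient.mk_surjective.range_comp, Set.range_subset_range_iff_exists_comp] at h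
  obtain ⟨k, rfl⟩ := h
  have φ_comp : Quotient.mk E ∘ α ∘ k = φ ∘ Quotient.mk E ∘ k :=
    congrArg (· ∘ k) hφ.comp_eq
  rw [φ_comp] at g_bij
  have k_bij : Bijective (Quotient.mk E ∘ k) :=
    ⟨g_bij.injective.of_comp, g_bij.surjective.of_comp_left φ_inj⟩
  exact ⟨k ∘ Quotient.mk E, mem_Q2_iff.2 ⟨k, k_bij, rfl⟩, rfl⟩

theorem exists_mem_Q2_comp_eq_of_mem_regT (hα : α ∈ regT E) (hβ : β ∈ Q2 E) :
    ∃ γ ∈ Q2 E, γ ∘ α = β := by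
  obtain ⟨φ, φ_bij, hφ⟩ := mem_regT_iff.1 hα
  obtain ⟨g, g_bij, rfl⟩ := mem_Q2_iff.1 hβ
  obtain ⟨ψ, ψ_left, ψ_right⟩ := bijective_iff_has_inverse.1 φ_bij
  have ψ_bij : Bijective ψ := bijective_iff_has_inverse.2 ⟨φ, ψ_right, ψ_left⟩
  refine ⟨(g ∘ ψ) ∘ Quotient.mk E, mem_Q2_iff.2 ⟨g ∘ ψ, g_bij.comp ψ_bij, rfl⟩, ?_⟩
  calc (g ∘ ψ) ∘ Quotient.mk E ∘ α = g ∘ (ψ ∘ φ) ∘ Quotient.mk E := by rw [hφ.comp_eq]; rfl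
    _ = g ∘ Quotient.mk E := by rw [ψ_left.comp_eq_id, id_comp]

end

/-- Green's `H`-relation on `Q(2)` (identity adjoined): `α H β` iff `Xα = Xβ`. -/
theorem stmt14 {X : Type u} [Nonempty X] (E : Setoid X) (α β : X → X)
    (hα : α ∈ Q2 E) (hβ : β ∈ Q2 E) :
    (((∃ γ, (γ ∈ Q2 E ∨ γ = id) ∧ α ∘ γ = β) ∧
      (∃ δ, (δ ∈ Q2 E ∨ δ = id) ∧ β ∘ δ = α)) ∧
     ((∃ γ', (γ' ∈ Q2 E ∨ γ' = id) ∧ γ' ∘ α = β) ∧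
      (∃ δ', (δ' ∈ Q2 E ∨ δ' = id) ∧ δ' ∘ β = α))) ↔
      Set.range α = Set.range β := by
  constructor
  · rintro ⟨⟨⟨γ, -, hγ⟩, δ, -, hδ⟩, -⟩
    exact Set.Subset.antisymm (hδ ▸ Set.range_comp_subset_range δ β)
      (hγ ▸ Set.range_comp_subset_range γ α)
  · intro h
    obtain ⟨γ, γ_mem, hγ⟩ := exists_mem_Q2_comp_eq_of_range_subset hα.1.1 hβ h.superset
    obtain ⟨δ, δ_mem, hδ⟩ := exists_mem_Q2_comp_eq_of_range_subset hβ.1.1 hα h.subset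
    obtain ⟨γ', γ'_mem, hγ'⟩ := exists_mem_Q2_comp_eq_of_mem_regT hα.1 hβ
    obtain ⟨δ', δ'_mem, hδ'⟩ := exists_mem_Q2_comp_eq_of_mem_regT hβ.1 hα
    exact ⟨⟨⟨γ, .inl γ_mem, hγ⟩, δ, .inl δ_mem, hδ⟩,
      ⟨γ', .inl γ'_mem, hγ'⟩, δ', .inl δ'_mem, hδ'⟩
end

section
/- Q(2) is a union of symmetric groups: Q(2) = ⋃_{α ∈ Q(2)} H_α where H_α = {β ∈ Q(2) : Xα = Xβ}, and for each α ∈ Q(2) the group H_α (under composition) is isomorphic to the symmetric group of all permutations of the set Xα (the range of α). -/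
universe u

/-- The `H`-class of `α` inside `Q(2)`. -/
def Hcl {X : Type u} (E : Setoid X) (α : X → X) : Set (X → X) :=
  {β | β ∈ Q2 E ∧ Set.range α = Set.range β}

/-!
A map lies in `Q(2)` exactly when its kernel is `E` and its range is a transversal `R` of `E`. Such
a map amounts to a bijection from `X/E` onto `R`, so once `X/E` is identified with `R` it amounts to
a permutation of `R`. Since every point of `R` represents its own class, composing such maps
composes the permutations.
-/

/-- `R` is a transversal (system of representatives) of `E`: it meets every `E`-class in exactly
one point. Stated as bijectivity of the quotient map restricted to `R`. -/
def IsTransversal {X : Type*} (E : Setoid X) (R : Set X) : Prop :=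
  Function.Bijective fun r : R => (⟦r.1⟧ : Quotient E)

namespace IsTransversal

variable {X : Type*} {E : Setoid X} {R : Set X}

theorem rel_iff_eq (h : IsTransversal E R) {x y : X} (hx : x ∈ R) (hy : y ∈ R) :
    E x y ↔ x = y :=
  Quotient.eq.symm.trans <|
    (h.injective.eq_iff (a := ⟨x, hx⟩) (b := ⟨y, hy⟩)).trans Subtype.mk_eq_mk

/-- The canonical bijection between a transversal and the quotient, sending a representative to
its class. -/
noncomputable def equivQuotient (h : IsTransversal E R) : R ≃ Quotient E :=
  Equiv.ofBijective _ h

/-- The point of the transversal `R` representing the class of `x`. -/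
noncomputable def repr (h : IsTransversal E R) (x : X) : R :=
  h.equivQuotient.symm ⟦x⟧

theorem repr_eq_repr_iff (h : IsTransversal E R) {x y : X} : h.repr x = h.repr y ↔ E x y :=
  h.equivQuotient.symm.injective.eq_iff.trans Quotient.eq

theorem repr_coe (h : IsTransversal E R) (r : R) : h.repr r = r :=
  h.equivQuotient.symm_apply_apply r

theorem repr_surjective (h : IsTransversal E R) : Function.Surjective h.repr :=
  fun r => ⟨r, h.repr_coe r⟩

/-- The extension of a permutation of `R` to the self-map of `X` that is constant on `E`-classes. -/
noncomputable def ofPerm (h : IsTransversal E R) (σ : Equiv.Perm R) : X → X :=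
  fun x => σ (h.repr x)

theorem ofPerm_injective (h : IsTransversal E R) : Function.Injective h.ofPerm := by
  intro σ τ hστ
  ext r
  simpa only [ofPerm, repr_coe] using congrFun hστ r

theorem ofPerm_mul (h : IsTransversal E R) (σ τ : Equiv.Perm R) :
    h.ofPerm (σ * τ) = h.ofPerm σ ∘ h.ofPerm τ := by
  funext x
  simp only [ofPerm, Function.comp_apply, repr_coe, Equiv.Perm.mul_apply]

theorem ker_ofPerm (h : IsTransversal E R) (σ : Equiv.Perm R) : Setoid.ker (h.ofPerm σ) = E := by
  ext x y
  rw [Setoid.ker_def, ofPerm, ofPerm, Subtype.coe_inj, σ.injective.eq_iff, h.repr_eq_repr_iff]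

theorem range_ofPerm (h : IsTransversal E R) (σ : Equiv.Perm R) :
    Set.range (h.ofPerm σ) = R :=
  ((σ.surjective.comp h.repr_surjective).range_comp Subtype.val).trans Subtype.range_coe

theorem mem_range_ofPerm_iff (h : IsTransversal E R) {β : X → X} :
    β ∈ Set.range h.ofPerm ↔ Setoid.ker β = E ∧ Set.range β = R := by
  constructor
  · rintro ⟨σ, rfl⟩
    exact ⟨h.ker_ofPerm σ, h.range_ofPerm σ⟩
  · rintro ⟨rfl, rfl⟩
    refine ⟨h.equivQuotient.trans (Setoid.quotientKerEquivRange β), funext fun x => ?_⟩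
    simp only [ofPerm, repr, Equiv.trans_apply, Equiv.apply_symm_apply]
    rfl

/-- The permutation of `R` attached to a self-map in the range of `ofPerm`, and a junk value on
other maps. The inverse is taken because self-maps of `X` are multiplied left to right, permutations
right to left. -/
noncomputable def toPerm (h : IsTransversal E R) (β : X → X) : Equiv.Perm R :=
  (Function.invFun h.ofPerm β)⁻¹

theorem toPerm_ofPerm (h : IsTransversal E R) (σ : Equiv.Perm R) : h.toPerm (h.ofPerm σ) = σ⁻¹ :=
  congrArg (·⁻¹) (Function.leftInverse_invFun h.ofPerm_injective σ)

theorem bijOn_toPerm (h : IsTransversal E R) :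
    Set.BijOn h.toPerm (Set.range h.ofPerm) Set.univ := by
  refine ⟨Set.mapsTo_univ _ _, ?_, fun σ _ => ⟨h.ofPerm σ⁻¹, Set.mem_range_self _, ?_⟩⟩
  · rintro _ ⟨σ, rfl⟩ _ ⟨τ, rfl⟩ hστ
    rw [toPerm_ofPerm, toPerm_ofPerm, inv_inj] at hστ
    rw [hστ]
  · rw [toPerm_ofPerm, inv_inv]

theorem toPerm_comp (h : IsTransversal E R) {β γ : X → X} (hβ : β ∈ Set.range h.ofPerm)
    (hγ : γ ∈ Set.range h.ofPerm) : h.toPerm (γ ∘ β) = h.toPerm β * h.toPerm γ := by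
  obtain ⟨σ, rfl⟩ := hβ
  obtain ⟨τ, rfl⟩ := hγ
  rw [← ofPerm_mul, toPerm_ofPerm, toPerm_ofPerm, toPerm_ofPerm, mul_inv_rev]

end IsTransversal

section

variable {X : Type u} {E : Setoid X} {α : X → X}

theorem image_cls_eq_singleton_iff {Y : Type*} {f : X → Y} {x : X} {y : Y} :
    f '' cls E x = {y} ↔ ∀ z, E x z → f z = y := by
  rw [Set.eq_singleton_iff_nonempty_unique_mem, Set.forall_mem_image]
  exact and_iff_right ⟨f x, x, E.refl x, rfl⟩

theorem ker_eq_of_mem_Q2 (hα : α ∈ Q2 E) : Setoid.ker α = E := by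
  ext x y
  refine ⟨fun hxy => (hα.1.1 x y).2 (hxy ▸ E.refl (α x)), fun hxy => ?_⟩
  obtain ⟨z, hz⟩ := hα.2 x
  rw [image_cls_eq_singleton_iff] at hz
  exact (hz x (E.refl x)).trans (hz y hxy).symm

theorem isTransversal_range_of_mem_Q2 (hα : α ∈ Q2 E) : IsTransversal E (Set.range α) := by
  constructor
  · rintro ⟨_, x, rfl⟩ ⟨_, y, rfl⟩ hxy
    have hE : E x y := (hα.1.1 x y).2 (Quotient.exact hxy)
    rw [← ker_eq_of_mem_Q2 hα] at hE
    exact Subtype.ext hE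
  · rintro ⟨x⟩
    obtain ⟨r, hxr, hr⟩ := hα.1.2 x
    exact ⟨⟨r, hr⟩, Quotient.sound (E.symm hxr)⟩

theorem mem_Q2_iff_s16 :
    α ∈ Q2 E ↔ Setoid.ker α = E ∧ IsTransversal E (Set.range α) := by
  refine ⟨fun hα => ⟨ker_eq_of_mem_Q2 hα, isTransversal_range_of_mem_Q2 hα⟩, ?_⟩
  rintro ⟨hker, hR⟩
  have hE (x y : X) : E x y ↔ α x = α y := by rw [← hker, Setoid.ker_def]
  refine ⟨⟨fun x y => ?_, fun x => ?_⟩, fun x => ⟨α x, ?_⟩⟩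
  · exact (hE x y).trans (hR.rel_iff_eq (Set.mem_range_self x) (Set.mem_range_self y)).symm
  · obtain ⟨r, hr⟩ := hR.2 ⟦x⟧
    exact ⟨r, E.symm (Quotient.exact hr), r.2⟩
  · exact image_cls_eq_singleton_iff.2 fun z hxz => ((hE x z).1 hxz).symm

theorem Hcl_eq_range_ofPerm (h : IsTransversal E (Set.range α)) :
    Hcl E α = Set.range h.ofPerm := by
  ext β
  rw [h.mem_range_ofPerm_iff]
  constructor
  · rintro ⟨hβ, hR⟩
    exact ⟨(mem_Q2_iff_s16.1 hβ).1, hR.symm⟩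
  · rintro ⟨hker, hR⟩
    exact ⟨mem_Q2_iff_s16.2 ⟨hker, hR ▸ h⟩, hR.symm⟩

theorem Q2_eq_iUnion_Hcl (E : Setoid X) : Q2 E = ⋃ α ∈ Q2 E, Hcl E α :=
  Set.Subset.antisymm (fun _ hα => Set.mem_biUnion hα ⟨hα, rfl⟩)
    (Set.iUnion₂_subset fun _ _ _ hβ => hβ.1)

end

/-- `Q(2)` is the union of its `H`-classes, each of which is isomorphic (as a group
under the composition of the semigroup) to the symmetric group on the range. -/
theorem stmt16 {X : Type u} [Nonempty X] (E : Setoid X) :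
    (Q2 E = ⋃ α ∈ Q2 E, Hcl E α) ∧
    ∀ α ∈ Q2 E, ∃ φ : (X → X) → Equiv.Perm ↥(Set.range α),
      Set.BijOn φ (Hcl E α) Set.univ ∧
      ∀ β ∈ Hcl E α, ∀ γ ∈ Hcl E α, φ (γ ∘ β) = φ β * φ γ := by
  refine ⟨Q2_eq_iUnion_Hcl E, fun α hα => ?_⟩
  have hR : IsTransversal E (Set.range α) := (mem_Q2_iff_s16.1 hα).2
  rw [Hcl_eq_range_ofPerm hR]
  exact ⟨hR.toPerm, hR.bijOn_toPerm, fun β hβ γ hγ => hR.toPerm_comp hβ hγ⟩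
end
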